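/- arXiv:0807.3056 — 2 statements merged into one kernel-verified Lean document; each statement's English description precedes it below -/
import Mathlib

section
/- With the fermionic Fock space V built from a complex vector space 𝒞 with symmetric bilinear form ⟨·,·⟩, the creation and annihilation operators satisfy the Clifford (canonical anticommutation) relations: for all u, v ∈ 𝒞 and all m, n ∈ ℤ + 1/2, u(m)v(n) + v(n)u(m) = ⟨u,v⟩ δ_{m,−n} · id_V. In particular the fields u(z) = Σ_{m ∈ ℤ+1/2} u(m) z^{−m−1/2} satisfy {u(z), v(w)} = ⟨u,v⟩ δ(z−w) coefficientwise. -/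
noncomputable section

variable (C : Type*) [AddCommGroup C] [Module ℂ C]

/-- `W = ⊕_{k ∈ ℤ_{≥0}+1/2} 𝒞^{(k)}`: the direct sum of copies of `𝒞`, the
copy indexed by `k : ℕ` standing for the half-integer `k + 1/2`; the element
of the `k`-th copy corresponding to `u : 𝒞` is the generator `u(-(k+1/2))`. -/
abbrev FockW := ℕ →₀ C

/-- The fermionic Fock space `V = Λ(W)`, the exterior algebra of `W`. -/
abbrev FockV := ExteriorAlgebra ℂ (FockW C)

/-- The creation operator `u(-(k+1/2))`: left exterior multiplication by the
generator `u(-(k+1/2))`. -/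
def create (u : C) (k : ℕ) : FockV C →ₗ[ℂ] FockV C :=
  LinearMap.mulLeft ℂ (ExteriorAlgebra.ι ℂ (Finsupp.single k u))

variable (B : C →ₗ[ℂ] C →ₗ[ℂ] ℂ)

/-- The annihilation operator `u(k+1/2)`: the unique odd derivation of `Λ(W)`
(the left contraction/interior product against the dual vector
`w ↦ ⟨u, w_k⟩`) sending the generator `v(-(l+1/2))` to `⟨u,v⟩ δ_{k,l} · 1`. -/
def annih (u : C) (k : ℕ) : FockV C →ₗ[ℂ] FockV C :=
  CliffordAlgebra.contractLeft ((B u).comp (Finsupp.lapply k))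

/-- The mode `u(m/2)` for an odd integer `m` (so that the half-integers
`m/2 ∈ ℤ + 1/2` are parametrized by odd `m : ℤ`): a creation operator if
`m/2 < 0`, an annihilation operator if `m/2 > 0`. -/
def fop (u : C) (m : ℤ) : FockV C →ₗ[ℂ] FockV C :=
  if m < 0 then create C u ((-m - 1) / 2).toNat else annih C B u ((m - 1) / 2).toNat

/-- The normal ordered product `:u(m/2) v(n/2):` for odd integers `m`, `n`:
it is `u(m/2)v(n/2)` if `m/2 < 0` and `−v(n/2)u(m/2)` if `m/2 > 0`. -/
def nord (u : C) (m : ℤ) (v : C) (n : ℤ) : FockV C →ₗ[ℂ] FockV C :=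
  if m < 0 then (fop C B u m).comp (fop C B v n)
  else -((fop C B v n).comp (fop C B u m))

/-- The normal-ordered quadratic operator
`T_{r₁,r₂}(p) = Σ_{k ∈ ℤ+1/2} :r₁(k) r₂(p−k):` applied to `x ∈ V`, the sum
running over the half-integers `k = j/2` with `j : ℤ` odd (on each vector of
`V` all but finitely many summands act as zero). -/
def Tq (r₁ r₂ : C) (p : ℤ) (x : FockV C) : FockV C :=
  ∑ᶠ (j : ℤ) (_ : Odd j), nord C B r₁ j r₂ (2 * p - j) x

end

/-!
Left contraction by a covector `d` is an odd derivation, so `d⌋(a x) + a (d⌋x) = d(a) x`: this is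
the only source of a nonzero anticommutator, since generators of an exterior algebra anticommute
among themselves, and so do contractions.
-/

section Clifford

open CliffordAlgebra

variable {R M : Type*} [CommRing R] [AddCommGroup M] [Module R M] (Q : QuadraticForm R M)

theorem mulLeft_ι_comp_mulLeft_ι_add_swap (a b : M) :
    (LinearMap.mulLeft R (ι Q a)).comp (LinearMap.mulLeft R (ι Q b)) +
        (LinearMap.mulLeft R (ι Q b)).comp (LinearMap.mulLeft R (ι Q a)) =
      QuadraticMap.polar Q a b • (LinearMap.id : CliffordAlgebra Q →ₗ[R] CliffordAlgebra Q) := by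
  ext x
  calc ι Q a * (ι Q b * x) + ι Q b * (ι Q a * x)
      = (ι Q a * ι Q b + ι Q b * ι Q a) * x := by rw [add_mul, mul_assoc, mul_assoc]
    _ = QuadraticMap.polar Q a b • x := by rw [ι_mul_ι_add_swap, Algebra.smul_def]

theorem contractLeft_comp_mulLeft_ι_add_swap (d : Module.Dual R M) (a : M) :
    (contractLeft (Q := Q) d).comp (LinearMap.mulLeft R (ι Q a)) +
        (LinearMap.mulLeft R (ι Q a)).comp (contractLeft (Q := Q) d) =
      d a • (LinearMap.id : CliffordAlgebra Q →ₗ[R] CliffordAlgebra Q) :=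
  LinearMap.ext fun x => add_eq_of_eq_sub (contractLeft_ι_mul d a x)

theorem contractLeft_comp_contractLeft_add_swap (d d' : Module.Dual R M) :
    (contractLeft (Q := Q) d).comp (contractLeft (Q := Q) d') +
      (contractLeft (Q := Q) d').comp (contractLeft (Q := Q) d) = 0 :=
  LinearMap.ext fun x => eq_neg_iff_add_eq_zero.mp (contractLeft_comm d d' x)

end Clifford

section Fock

variable {C : Type*} [AddCommGroup C] [Module ℂ C]

theorem create_comp_create_add_swap (u v : C) (k l : ℕ) :
    (create C u k).comp (create C v l) + (create C v l).comp (create C u k) = 0 := by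
  have h := mulLeft_ι_comp_mulLeft_ι_add_swap (0 : QuadraticForm ℂ (FockW C))
    (Finsupp.single k u) (Finsupp.single l v)
  rwa [(QuadraticMap.IsOrtho.all _ _).polar_eq_zero, zero_smul] at h

variable (B : C →ₗ[ℂ] C →ₗ[ℂ] ℂ)

theorem annih_comp_annih_add_swap (u v : C) (k l : ℕ) :
    (annih C B u k).comp (annih C B v l) + (annih C B v l).comp (annih C B u k) = 0 :=
  contractLeft_comp_contractLeft_add_swap _ _ _

theorem annih_comp_create_add_swap (u v : C) (k l : ℕ) :
    (annih C B u k).comp (create C v l) + (create C v l).comp (annih C B u k) =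
      if k = l then B u v • (LinearMap.id : FockV C →ₗ[ℂ] FockV C) else 0 := by
  have pairing : (B u).comp (Finsupp.lapply k) (Finsupp.single l v) =
      if k = l then B u v else 0 := by
    simp [Finsupp.single_apply, eq_comm, apply_ite (B u)]
  have h := contractLeft_comp_mulLeft_ι_add_swap (0 : QuadraticForm ℂ (FockW C))
    ((B u).comp (Finsupp.lapply k)) (Finsupp.single l v)
  rwa [pairing, ite_smul, zero_smul] at h

theorem fop_two_mul_add_one (u : C) (k : ℕ) : fop C B u (2 * k + 1) = annih C B u k := by
  rw [fop, if_neg (by lia)]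
  congr
  lia

theorem fop_neg_two_mul_add_one (u : C) (k : ℕ) : fop C B u (-(2 * k + 1)) = create C u k := by
  rw [fop, if_pos (by lia)]
  congr
  lia

end Fock

theorem exists_nat_eq_or_eq_neg_of_odd {m : ℤ} (hm : Odd m) :
    ∃ k : ℕ, m = 2 * k + 1 ∨ m = -(2 * k + 1) := by
  obtain ⟨k, hk⟩ := hm.natAbs
  exact ⟨k, by lia⟩

/-- The creation and annihilation operators on the fermionic Fock space
satisfy the Clifford (canonical anticommutation) relations: for `u, v ∈ 𝒞`
and half-integers `m/2, n/2 ∈ ℤ + 1/2` (`m`, `n` odd),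
`u(m/2)v(n/2) + v(n/2)u(m/2) = ⟨u,v⟩ δ_{m/2,−n/2} · id_V`; coefficientwise
this is the field relation `{u(z), v(w)} = ⟨u,v⟩ δ(z−w)`. -/
theorem clifford_anticommutation_relations
    (C : Type*) [AddCommGroup C] [Module ℂ C]
    (B : C →ₗ[ℂ] C →ₗ[ℂ] ℂ) (hB : ∀ u v : C, B u v = B v u)
    (u v : C) (m n : ℤ) (hm : Odd m) (hn : Odd n) :
    (fop C B u m).comp (fop C B v n) + (fop C B v n).comp (fop C B u m) =
      if m = -n then (B u v) • (LinearMap.id : FockV C →ₗ[ℂ] FockV C) else 0 := by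
  obtain ⟨k, rfl | rfl⟩ := exists_nat_eq_or_eq_neg_of_odd hm <;>
    obtain ⟨l, rfl | rfl⟩ := exists_nat_eq_or_eq_neg_of_odd hn <;>
    simp only [fop_two_mul_add_one, fop_neg_two_mul_add_one]
  · rw [annih_comp_annih_add_swap, if_neg (by lia)]
  · rw [annih_comp_create_add_swap]
    exact if_congr (by lia) rfl rfl
  · rw [add_comm, annih_comp_create_add_swap, hB v u]
    exact if_congr (by lia) rfl rfl
  · rw [create_comp_create_add_swap, if_neg (by lia)]
end

section
/- With the fermionic Fock space V built from a complex vector space 𝒞 with symmetric bilinear form ⟨·,·⟩, the normal-ordered square of any fermionic field vanishes: for every u ∈ 𝒞 and every p ∈ ℤ, the operator T_{u,u}(p) = Σ_{k ∈ ℤ+1/2} :u(k)u(p−k): is the zero operator on V (componentwise form of :u(z)u(z): = 0). -/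
/-!
Normal ordering makes any two modes anticommute: `:u(m)v(n): = -:v(n)u(m):`. For two creation or
two annihilation operators this is the anticommutation relation in the exterior algebra; for a mixed
pair both sides order the operators in the same way. Reindexing by `k ↦ p - k` therefore gives
`T_{u,v}(p) = -T_{v,u}(p)`, and `T_{u,u}(p) = 0` follows by taking `v = u`.

The sum is finite on each vector `x` because `x` involves only finitely many generators, so `u(k)`
kills it for large `k`, and as `k → ±∞` the operator of `:u(k)v(p-k):` that acts first is an
annihilation operator of large mode.
-/

open Filter

theorem eventually_contractLeft_eq_zero {α R M : Type*} [CommRing R] [AddCommGroup M] [Module R M]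
    {Q : QuadraticForm R M} {l : Filter α} {d : α → Module.Dual R M}
    (hd : ∀ m, ∀ᶠ a in l, d a m = 0) (x : CliffordAlgebra Q) :
    ∀ᶠ a in l, CliffordAlgebra.contractLeft (d a) x = 0 := by
  induction x using CliffordAlgebra.left_induction with
  | algebraMap r => exact .of_forall fun a => CliffordAlgebra.contractLeft_algebraMap Q (d a) r
  | add x y hx hy =>
    filter_upwards [hx, hy] with a hxa hya
    rw [map_add, hxa, hya, add_zero]
  | ι_mul x m hx =>
    filter_upwards [hx, hd m] with a hxa hma
    rw [CliffordAlgebra.contractLeft_ι_mul, hxa, hma, zero_smul, mul_zero, sub_zero]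

section

variable {C : Type*} [AddCommGroup C] [Module ℂ C] (B : C →ₗ[ℂ] C →ₗ[ℂ] ℂ)

theorem create_create_swap (u v : C) (k l : ℕ) (x : FockV C) :
    create C u k (create C v l x) = -create C v l (create C u k x) := by
  simp only [create, LinearMap.mulLeft_apply, ← mul_assoc]
  rw [eq_neg_of_add_eq_zero_left (ExteriorAlgebra.ι_add_mul_swap _ _), neg_mul]

theorem annih_annih_swap (u v : C) (k l : ℕ) (x : FockV C) :
    annih C B u k (annih C B v l x) = -annih C B v l (annih C B u k x) :=
  CliffordAlgebra.contractLeft_comm _ _ x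

theorem eventually_annih_eq_zero (u : C) (x : FockV C) :
    ∀ᶠ k in atTop, annih C B u k x = 0 := by
  refine eventually_contractLeft_eq_zero (fun w => ?_) x
  have hw : ∀ᶠ k in atTop, w k = 0 := by
    rw [← Nat.cofinite_eq_atTop]
    exact w.hasFiniteSupport
  filter_upwards [hw] with k hk
  simp [hk]

theorem fop_fop_swap {m n : ℤ} (hmn : m < 0 ↔ n < 0) (u v : C) (x : FockV C) :
    fop C B u m (fop C B v n x) = -fop C B v n (fop C B u m x) := by
  by_cases hn : n < 0
  · simp only [fop, hmn, if_pos hn, create_create_swap u v]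
  · simp only [fop, hmn, if_neg hn, annih_annih_swap B u v]

theorem eventually_fop_eq_zero (u : C) (x : FockV C) :
    ∀ᶠ m in atTop, fop C B u m x = 0 := by
  obtain ⟨N, hN⟩ := eventually_atTop.1 (eventually_annih_eq_zero B u x)
  filter_upwards [eventually_ge_atTop (2 * N + 1 : ℤ)] with m hm
  rw [fop, if_neg (by lia)]
  exact hN _ (by lia)

theorem nord_swap (u v : C) (m n : ℤ) (x : FockV C) :
    nord C B u m v n x = -nord C B v n u m x := by
  by_cases hm : m < 0 <;> by_cases hn : n < 0 <;>
    simp only [nord, hm, hn, if_true, if_false, LinearMap.comp_apply, LinearMap.neg_apply, neg_neg]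
  · exact fop_fop_swap B (iff_of_true hm hn) u v x
  · rw [fop_fop_swap B (iff_of_false hn hm) v u x, neg_neg]

theorem eventually_nord_atTop_eq_zero (u v : C) (n : ℤ) (x : FockV C) :
    ∀ᶠ j in atTop, nord C B u j v (n - j) x = 0 := by
  filter_upwards [eventually_fop_eq_zero B u x, eventually_ge_atTop 0] with j hj hj₀
  rw [nord, if_neg hj₀.not_gt, LinearMap.neg_apply, LinearMap.comp_apply, hj, map_zero, neg_zero]

theorem eventually_nord_atBot_eq_zero (u v : C) (n : ℤ) (x : FockV C) :
    ∀ᶠ j in atBot, nord C B u j v (n - j) x = 0 := by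
  have hlim : Tendsto (fun j : ℤ => n - j) atBot atTop := by
    simpa only [sub_eq_add_neg] using
      tendsto_atTop_add_const_left _ n tendsto_neg_atBot_atTop
  filter_upwards [hlim.eventually (eventually_fop_eq_zero B v x), eventually_lt_atBot 0]
    with j hj hj₀
  rw [nord, if_pos hj₀, LinearMap.comp_apply, hj, map_zero]

theorem finite_setOf_nord_ne_zero (u v : C) (n : ℤ) (x : FockV C) :
    {j : ℤ | nord C B u j v (n - j) x ≠ 0}.Finite := by
  rw [← eventually_cofinite, Int.cofinite_eq, eventually_sup]
  exact ⟨eventually_nord_atBot_eq_zero B u v n x, eventually_nord_atTop_eq_zero B u v n x⟩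

theorem Tq_swap (u v : C) (p : ℤ) (x : FockV C) : Tq C B u v p x = -Tq C B v u p x := by
  have odd_reflect (j : ℤ) : Odd (2 * p - j) ↔ Odd j := by
    simp [Int.odd_sub']
  calc Tq C B u v p x
      = ∑ᶠ (j : ℤ) (_ : Odd (2 * p - j)), nord C B u (2 * p - j) v (2 * p - (2 * p - j)) x :=
        (finsum_comp_equiv (Equiv.subLeft (2 * p))).symm
    _ = ∑ᶠ (j : ℤ) (_ : Odd j), -nord C B v j u (2 * p - j) x := by
        simp only [odd_reflect, sub_sub_cancel, nord_swap B u v]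
    _ = -Tq C B v u p x := by simp only [finsum_neg_distrib, Tq]

theorem Tq_self (u : C) (p : ℤ) (x : FockV C) : Tq C B u u p x = 0 :=
  have : IsAddTorsionFree (FockV C) := .of_isTorsionFree ℂ _
  self_eq_neg.1 (Tq_swap B u u p x)

theorem normal_ordered_square_vanishes_general (u : C) (p : ℤ) (x : FockV C) :
    {j : ℤ | Odd j ∧ nord C B u j u (2 * p - j) x ≠ 0}.Finite ∧ Tq C B u u p x = 0 :=
  ⟨(finite_setOf_nord_ne_zero B u u (2 * p) x).subset fun _ hj => hj.2, Tq_self B u p x⟩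

end

/-- The normal-ordered square of any fermionic field vanishes: for every
`u ∈ 𝒞` and `p ∈ ℤ`, the operator `T_{u,u}(p) = Σ_{k ∈ ℤ+1/2} :u(k)u(p−k):`
is well defined (on each vector only finitely many summands are nonzero) and
is the zero operator on `V` (componentwise form of `:u(z)u(z): = 0`). -/
theorem normal_ordered_square_vanishes
    (C : Type*) [AddCommGroup C] [Module ℂ C]
    (B : C →ₗ[ℂ] C →ₗ[ℂ] ℂ) (hB : ∀ u v : C, B u v = B v u)
    (u : C) (p : ℤ) (x : FockV C) :
    {j : ℤ | Odd j ∧ nord C B u j u (2 * p - j) x ≠ 0}.Finite ∧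
      Tq C B u u p x = 0 :=
  normal_ordered_square_vanishes_general B u p x
end
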